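/- Null-criticality for the (p,A)-Laplacian (case 1 < p ≤ n): let 0 ∈ Ω, Ω* := Ω \ {0}, and 1 < p ≤ n. Suppose −Δ_{p,A} is subcritical in Ω, and suppose G ∈ C¹(Ω*) is a positive weakly (p,A)-harmonic function in Ω* with G(x) → ∞ as x → 0 and G → 0 at infinity in Ω. Set W := ((p−1)/p)^p (|∇G|_A / G)^p and v := G^{(p−1)/p}. Then ∫_{Ω*} W v^p dx = ((p−1)/p)^p ∫_{Ω*} |∇G|_A^p G^{−1} dx = ∞. -/

import Mathlib

/-!
The push-forward of the measure `|∇G|_A^p dx` under `G` is a nonzero multiple of Lebesgue measure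
on `(0, ∞)`, hence `∫ |∇G|_A^p / G dx` is a nonzero multiple of `∫_0^∞ dt / t = ∞`. (By the coarea
formula the multiple is the flux of `|∇G|_A^{p-2} A∇G` through a level set of `G`.)

Only the following part of this is needed, and it avoids both the coarea formula and level sets.
If `F` is `C¹` and vanishes off a compact subset of `(0, ∞)`, then `F ∘ G` is a `C¹` function with
compact support in `Ω \ {0}`, because `G → ∞` at `0` and `G → 0` at infinity in `Ω`. Testing the
equation with it (legitimate after mollification, `IsPAHarmonic.integral_eq_zero`) gives
`∫ |∇G|_A^p F'(G) dx = 0`. With `F(t) = ∫_{ct}^t h` this says that the dilates `t ↦ c h(ct)` of a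
function `h` compactly supported in `(0, ∞)` all have the same integral `J` against the
push-forward (`integral_rescale`).

Since `G → ∞` at `0`, there is a point `x₀` with `∇G(x₀) ≠ 0`. Let `h` be a tent function around
`G(x₀)`, so that `J > 0`. The supports of the dilates of `h` by `c = 2^{-k}` have disjoint
interiors, and their sum is at most a constant times `1 / t` (`sum_tent_le`); thus `N J` is
bounded by a constant multiple of `∫ |∇G|_A^p / G dx` for every `N`, and the integral diverges.
-/

open MeasureTheory Set Filter Topology

noncomputable section

variable {n : ℕ}

/-- The `A`-inner product `⟨A(x)ξ, η⟩`. -/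
def aInner (A : EuclideanSpace ℝ (Fin n) → Matrix (Fin n) (Fin n) ℝ)
    (x ξ η : EuclideanSpace ℝ (Fin n)) : ℝ :=
  ∑ i, ∑ j, A x i j * ξ j * η i

/-- `|ξ|_A := ⟨A(x)ξ, ξ⟩^{1/2}`. -/
def aNorm (A : EuclideanSpace ℝ (Fin n) → Matrix (Fin n) (Fin n) ℝ)
    (x ξ : EuclideanSpace ℝ (Fin n)) : ℝ :=
  Real.sqrt (aInner A x ξ ξ)

/-- Assumptions on the matrix field `A`: symmetric, positive definite, locally Hölder
continuous, and locally uniformly elliptic on `Ω`. -/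
structure IsEllipticMatrix (Ω : Set (EuclideanSpace ℝ (Fin n)))
    (A : EuclideanSpace ℝ (Fin n) → Matrix (Fin n) (Fin n) ℝ) : Prop where
  symm : ∀ x ∈ Ω, (A x).IsSymm
  posdef : ∀ x ∈ Ω, ∀ ξ : EuclideanSpace ℝ (Fin n), ξ ≠ 0 → 0 < aInner A x ξ ξ
  locHolder : ∀ K ⊆ Ω, IsCompact K → ∃ C > (0:ℝ), ∃ α ∈ Set.Ioc (0:ℝ) 1,
      ∀ x ∈ K, ∀ y ∈ K, ∀ i j, |A x i j - A y i j| ≤ C * dist x y ^ α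
  elliptic : ∀ K ⊆ Ω, IsCompact K → ∃ Θ > (0:ℝ), ∀ x ∈ K, ∀ ξ : EuclideanSpace ℝ (Fin n),
      Θ⁻¹ * ‖ξ‖ ^ 2 ≤ aInner A x ξ ξ ∧ aInner A x ξ ξ ≤ Θ * ‖ξ‖ ^ 2

/-- Test functions: `C_c^∞` functions with support in `U`. -/
def IsTestFun (U : Set (EuclideanSpace ℝ (Fin n))) (ψ : EuclideanSpace ℝ (Fin n) → ℝ) : Prop :=
  ContDiff ℝ (⊤ : ℕ∞) ψ ∧ HasCompactSupport ψ ∧ tsupport ψ ⊆ U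

/-- Weakly `(p,A)`-harmonic in `U`. -/
def IsPAHarmonic (A : EuclideanSpace ℝ (Fin n) → Matrix (Fin n) (Fin n) ℝ) (p : ℝ)
    (U : Set (EuclideanSpace ℝ (Fin n))) (G : EuclideanSpace ℝ (Fin n) → ℝ) : Prop :=
  ∀ ψ, IsTestFun U ψ →
    ∫ x in U, (aNorm A x (gradient G x)) ^ (p - 2) *
      aInner A x (gradient G x) (gradient ψ x) = 0

/-- Weak solution of `Q_{p,A,V}(u) = g` in `U` (for positive `u`). -/
def IsWeakSolution (A : EuclideanSpace ℝ (Fin n) → Matrix (Fin n) (Fin n) ℝ) (p : ℝ)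
    (V g : EuclideanSpace ℝ (Fin n) → ℝ) (U : Set (EuclideanSpace ℝ (Fin n)))
    (u : EuclideanSpace ℝ (Fin n) → ℝ) : Prop :=
  ∀ ψ, IsTestFun U ψ →
    (∫ x in U, (aNorm A x (gradient u x)) ^ (p - 2) *
        aInner A x (gradient u x) (gradient ψ x))
      + (∫ x in U, V x * u x ^ (p - 1) * ψ x)
      = ∫ x in U, g x * ψ x

/-- Weak supersolution of `Q_{p,A,V}(u) = 0` in `U` (for positive `u`). -/
def IsWeakSupersolution (A : EuclideanSpace ℝ (Fin n) → Matrix (Fin n) (Fin n) ℝ) (p : ℝ)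
    (V : EuclideanSpace ℝ (Fin n) → ℝ) (U : Set (EuclideanSpace ℝ (Fin n)))
    (u : EuclideanSpace ℝ (Fin n) → ℝ) : Prop :=
  ∀ ψ, IsTestFun U ψ → (∀ x, 0 ≤ ψ x) →
    0 ≤ (∫ x in U, (aNorm A x (gradient u x)) ^ (p - 2) *
        aInner A x (gradient u x) (gradient ψ x))
      + (∫ x in U, V x * u x ^ (p - 1) * ψ x)

/-- `Q_{p,A,V}` is subcritical in `Ω`. -/
def IsSubcritical (A : EuclideanSpace ℝ (Fin n) → Matrix (Fin n) (Fin n) ℝ) (p : ℝ)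
    (V : EuclideanSpace ℝ (Fin n) → ℝ) (Ω : Set (EuclideanSpace ℝ (Fin n))) : Prop :=
  ∃ W₀ : EuclideanSpace ℝ (Fin n) → ℝ, ContinuousOn W₀ Ω ∧ (∀ x ∈ Ω, 0 ≤ W₀ x) ∧
    (∃ x ∈ Ω, W₀ x ≠ 0) ∧
    ∀ ψ, IsTestFun Ω ψ →
      0 ≤ ∫ x in Ω, ((aNorm A x (gradient ψ x)) ^ p + (V x - W₀ x) * |ψ x| ^ p)

/-- A null-sequence for `Q_{p,A,V}` in `U`. -/
def IsNullSequence (A : EuclideanSpace ℝ (Fin n) → Matrix (Fin n) (Fin n) ℝ) (p : ℝ)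
    (V : EuclideanSpace ℝ (Fin n) → ℝ) (U : Set (EuclideanSpace ℝ (Fin n)))
    (u : ℕ → EuclideanSpace ℝ (Fin n) → ℝ) : Prop :=
  (∀ k, IsTestFun U (u k)) ∧ (∀ k x, 0 ≤ u k x) ∧
  (∃ B : Set (EuclideanSpace ℝ (Fin n)), IsOpen B ∧ B.Nonempty ∧
      IsCompact (closure B) ∧ closure B ⊆ U ∧
      ∃ c > (0:ℝ), ∀ k, c ≤ (∫ x in B, u k x ^ p) ∧ (∫ x in B, u k x ^ p) ≤ c⁻¹) ∧
  Tendsto (fun k => ∫ x in U,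
      ((aNorm A x (gradient (u k) x)) ^ p + V x * |u k x| ^ p)) atTop (𝓝 0)

/-- `V` lies in the local Morrey space `M^q_loc(p;Ω)`. -/
def InMorreyLoc (p : ℝ) (Ω : Set (EuclideanSpace ℝ (Fin n)))
    (V : EuclideanSpace ℝ (Fin n) → ℝ) : Prop :=
  if p < n then
    ∃ q : ℝ, q > (n : ℝ) / p ∧ ∀ ω : Set (EuclideanSpace ℝ (Fin n)),
      IsOpen ω → IsCompact (closure ω) → closure ω ⊆ Ω →
      ∃ M : ℝ, ∀ y ∈ ω, ∀ r ∈ Set.Ioo (0:ℝ) (Metric.diam ω),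
        r ^ ((n : ℝ) / q - n) * (∫ x in ω ∩ Metric.ball y r, |V x|) ≤ M
  else if (n : ℝ) < p then
    MeasureTheory.LocallyIntegrableOn V Ω
  else
    ∃ q : ℝ, q > (n : ℝ) ∧ ∀ ω : Set (EuclideanSpace ℝ (Fin n)),
      IsOpen ω → IsCompact (closure ω) → closure ω ⊆ Ω →
      ∃ M : ℝ, ∀ y ∈ ω, ∀ r ∈ Set.Ioo (0:ℝ) (Metric.diam ω),
        (Real.log (Metric.diam ω / r)) ^ (q * ((n : ℝ) - 1) / n) *
          (∫ x in ω ∩ Metric.ball y r, |V x|) ≤ M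

/-- `G ∈ C^{1,α}(U)`: continuously differentiable with locally `α`-Hölder gradient. -/
def IsC1Holder (α : ℝ) (U : Set (EuclideanSpace ℝ (Fin n)))
    (G : EuclideanSpace ℝ (Fin n) → ℝ) : Prop :=
  ContDiffOn ℝ 1 G U ∧ ∀ K ⊆ U, IsCompact K → ∃ C : ℝ,
    ∀ x ∈ K, ∀ y ∈ K, ‖gradient G x - gradient G y‖ ≤ C * dist x y ^ α

/-- `G → 0` at infinity in `Ω` (where `G` is considered on `U ⊆ Ω`). -/
def TendstoZeroAtInfinityIn (Ω U : Set (EuclideanSpace ℝ (Fin n)))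
    (G : EuclideanSpace ℝ (Fin n) → ℝ) : Prop :=
  ∀ ε > (0:ℝ), ∃ K ⊆ Ω, IsCompact K ∧ ∀ x ∈ U \ K, G x < ε

open scoped Classical in
/-- Flux integral `∫_S |∇G|_A^p / |∇G| dH^{n-1}`, with integrand `0` where `∇G = 0`. -/
def fluxIntegral (A : EuclideanSpace ℝ (Fin n) → Matrix (Fin n) (Fin n) ℝ) (p : ℝ)
    (G : EuclideanSpace ℝ (Fin n) → ℝ) (S : Set (EuclideanSpace ℝ (Fin n))) : ℝ :=
  ∫ x in S, (if gradient G x = 0 then 0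
    else (aNorm A x (gradient G x)) ^ p / ‖gradient G x‖) ∂(μH[(n : ℝ) - 1])

end


/-! ### The `A`-inner product -/

lemma matrix_entry_continuousOn {n : ℕ} {Ω : Set (EuclideanSpace ℝ (Fin n))}
    (hΩopen : IsOpen Ω) {A : EuclideanSpace ℝ (Fin n) → Matrix (Fin n) (Fin n) ℝ}
    (hA : IsEllipticMatrix Ω A) (i j : Fin n) : ContinuousOn (fun x => A x i j) Ω := by
  intro x hx
  apply ContinuousAt.continuousWithinAt
  obtain ⟨r, hr, hball⟩ := Metric.nhds_basis_closedBall.mem_iff.1 (hΩopen.mem_nhds hx)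
  obtain ⟨C, hC, α, hα, hH⟩ := hA.locHolder _ hball (isCompact_closedBall x r)
  rw [ContinuousAt, tendsto_iff_dist_tendsto_zero]
  have hlim : Tendsto (fun y => C * dist y x ^ α) (𝓝 x) (𝓝 0) := by
    have h1 : Tendsto (fun y => dist y x) (𝓝 x) (𝓝 0) := by
      have := (continuous_id.dist (continuous_const (y := x))).tendsto x
      simpa using this
    have h2 := (h1.rpow_const (p := α) (Or.inr hα.1.le)).const_mul C
    simpa [Real.zero_rpow hα.1.ne'] using h2
  refine squeeze_zero' (Eventually.of_forall fun _ => dist_nonneg) ?_ hlim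
  filter_upwards [Metric.closedBall_mem_nhds x hr] with y hy
  rw [Real.dist_eq]
  exact hH y hy x (Metric.mem_closedBall_self hr.le) i j

lemma aInner_continuousOn {n : ℕ} {Ω S : Set (EuclideanSpace ℝ (Fin n))}
    (hΩopen : IsOpen Ω) {A : EuclideanSpace ℝ (Fin n) → Matrix (Fin n) (Fin n) ℝ}
    (hA : IsEllipticMatrix Ω A) (hS : S ⊆ Ω)
    {ξ η : EuclideanSpace ℝ (Fin n) → EuclideanSpace ℝ (Fin n)}
    (hξ : ContinuousOn ξ S) (hη : ContinuousOn η S) :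
    ContinuousOn (fun x => aInner A x (ξ x) (η x)) S := by
  unfold aInner
  refine continuousOn_finsetSum _ fun i _ => continuousOn_finsetSum _ fun j _ => ?_
  have hAij := (matrix_entry_continuousOn hΩopen hA i j).mono hS
  have h1 : ContinuousOn (fun x => ξ x j) S := by fun_prop
  have h2 : ContinuousOn (fun x => η x i) S := by fun_prop
  exact (hAij.mul h1).mul h2

lemma aInner_nonneg {n : ℕ} {Ω : Set (EuclideanSpace ℝ (Fin n))}
    {A : EuclideanSpace ℝ (Fin n) → Matrix (Fin n) (Fin n) ℝ}
    (hA : IsEllipticMatrix Ω A) {x : EuclideanSpace ℝ (Fin n)} (hx : x ∈ Ω)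
    (ξ : EuclideanSpace ℝ (Fin n)) : 0 ≤ aInner A x ξ ξ := by
  by_cases h : ξ = 0
  · simp [h, aInner]
  · exact (hA.posdef x hx ξ h).le

lemma aInner_smul_right {n : ℕ} (A : EuclideanSpace ℝ (Fin n) → Matrix (Fin n) (Fin n) ℝ)
    (x ξ η : EuclideanSpace ℝ (Fin n)) (c : ℝ) :
    aInner A x ξ (c • η) = c * aInner A x ξ η := by
  simp only [aInner, PiLp.smul_apply, smul_eq_mul, Finset.mul_sum]
  exact Finset.sum_congr rfl fun i _ => Finset.sum_congr rfl fun j _ => by ring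

/-- Cauchy–Schwarz: `⟨A(x)(tξ + η), tξ + η⟩` is a nonnegative quadratic polynomial in `t`. -/
lemma abs_aInner_le {n : ℕ} {Ω : Set (EuclideanSpace ℝ (Fin n))}
    {A : EuclideanSpace ℝ (Fin n) → Matrix (Fin n) (Fin n) ℝ}
    (hA : IsEllipticMatrix Ω A) {x : EuclideanSpace ℝ (Fin n)} (hx : x ∈ Ω)
    (ξ η : EuclideanSpace ℝ (Fin n)) :
    |aInner A x ξ η| ≤ aNorm A x ξ * aNorm A x η := by
  have hsymm : aInner A x η ξ = aInner A x ξ η := by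
    unfold aInner
    rw [Finset.sum_comm]
    refine Finset.sum_congr rfl fun i _ => Finset.sum_congr rfl fun j _ => ?_
    rw [(hA.symm x hx).apply i j]
    ring
  have hquad : ∀ t : ℝ, 0 ≤ aInner A x ξ ξ * (t * t) + (2 * aInner A x ξ η) * t
      + aInner A x η η := by
    intro t
    have h := aInner_nonneg hA hx (t • ξ + η)
    have hexp : aInner A x (t • ξ + η) (t • ξ + η) = aInner A x ξ ξ * (t * t)
        + (aInner A x ξ η + aInner A x η ξ) * t + aInner A x η η := by
      simp only [aInner, PiLp.add_apply, PiLp.smul_apply, smul_eq_mul, Finset.sum_mul,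
        ← Finset.sum_add_distrib]
      exact Finset.sum_congr rfl fun i _ => Finset.sum_congr rfl fun j _ => by ring
    rw [hexp, hsymm] at h
    linarith
  have hd := discrim_le_zero hquad
  rw [discrim] at hd
  unfold aNorm
  rw [← Real.sqrt_mul (aInner_nonneg hA hx ξ)]
  exact Real.abs_le_sqrt (by linarith)

lemma aNorm_continuousOn {n : ℕ} {Ω S : Set (EuclideanSpace ℝ (Fin n))}
    (hΩopen : IsOpen Ω) {A : EuclideanSpace ℝ (Fin n) → Matrix (Fin n) (Fin n) ℝ}
    (hA : IsEllipticMatrix Ω A) (hS : S ⊆ Ω)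
    {ξ : EuclideanSpace ℝ (Fin n) → EuclideanSpace ℝ (Fin n)}
    (hξ : ContinuousOn ξ S) : ContinuousOn (fun x => aNorm A x (ξ x)) S :=
  (aInner_continuousOn hΩopen hA hS hξ hξ).sqrt

/-- The integrand of the weak formulation grows like `|ξ|_A^{p-1}`; this covers `ξ = 0` with
`p < 2` too, where the factor `|ξ|_A^{p-2}` alone would blow up. -/
lemma abs_flux_le {n : ℕ} {Ω : Set (EuclideanSpace ℝ (Fin n))}
    {A : EuclideanSpace ℝ (Fin n) → Matrix (Fin n) (Fin n) ℝ}
    (hA : IsEllipticMatrix Ω A) (p : ℝ)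
    {x : EuclideanSpace ℝ (Fin n)} (hx : x ∈ Ω)
    (ξ η : EuclideanSpace ℝ (Fin n)) :
    |aNorm A x ξ ^ (p - 2) * aInner A x ξ η| ≤ aNorm A x ξ ^ (p - 1) * aNorm A x η := by
  have h0 : 0 ≤ aNorm A x ξ := Real.sqrt_nonneg _
  have hcs := abs_aInner_le hA hx ξ η
  rw [abs_mul, abs_of_nonneg (Real.rpow_nonneg h0 _)]
  rcases h0.eq_or_lt with h | h
  · rw [← h, zero_mul] at hcs
    rw [le_antisymm hcs (abs_nonneg _), mul_zero]
    exact mul_nonneg (Real.rpow_nonneg h0 _) (Real.sqrt_nonneg _)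
  · calc aNorm A x ξ ^ (p - 2) * |aInner A x ξ η|
        ≤ aNorm A x ξ ^ (p - 2) * (aNorm A x ξ * aNorm A x η) :=
          mul_le_mul_of_nonneg_left hcs (Real.rpow_nonneg h0 _)
      _ = aNorm A x ξ ^ (p - 1) * aNorm A x η := by
          rw [show p - 1 = (p - 2) + 1 by ring, Real.rpow_add_one h.ne']
          ring

lemma flux_self {n : ℕ} {Ω : Set (EuclideanSpace ℝ (Fin n))}
    {A : EuclideanSpace ℝ (Fin n) → Matrix (Fin n) (Fin n) ℝ}
    (hA : IsEllipticMatrix Ω A) {p : ℝ} (hp : 1 < p)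
    {x : EuclideanSpace ℝ (Fin n)} (hx : x ∈ Ω) (ξ : EuclideanSpace ℝ (Fin n)) :
    aNorm A x ξ ^ (p - 2) * aInner A x ξ ξ = aNorm A x ξ ^ p := by
  have h0 : 0 ≤ aNorm A x ξ := Real.sqrt_nonneg _
  have hsq : aInner A x ξ ξ = aNorm A x ξ ^ (2 : ℝ) := by
    rw [Real.rpow_two, aNorm, Real.sq_sqrt (aInner_nonneg hA hx ξ)]
  rw [hsq]
  rcases h0.eq_or_lt with h | h
  · rw [← h, Real.zero_rpow (by norm_num : (2 : ℝ) ≠ 0), mul_zero,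
      Real.zero_rpow (by linarith : p ≠ 0)]
  · rw [← Real.rpow_add h]
    congr 1
    ring

lemma gradient_continuousOn {n : ℕ} {U : Set (EuclideanSpace ℝ (Fin n))} (hU : IsOpen U)
    {f : EuclideanSpace ℝ (Fin n) → ℝ} (hf : ContDiffOn ℝ 1 f U) :
    ContinuousOn (gradient f) U :=
  (InnerProductSpace.toDual ℝ _).symm.continuous.comp_continuousOn
    (hf.continuousOn_fderiv_of_isOpen hU le_rfl)

/-! ### Test functions of class `C¹` -/

/-- Mollification: a compactly supported `C¹` function is approximated by test functions with
supports in a common compact set and gradients that are uniformly bounded and converge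
pointwise. -/
lemma exists_mollification {n : ℕ} {U : Set (EuclideanSpace ℝ (Fin n))} (hU : IsOpen U)
    {ψ : EuclideanSpace ℝ (Fin n) → ℝ} (hψ : ContDiff ℝ 1 ψ) (hc : HasCompactSupport ψ)
    (hs : tsupport ψ ⊆ U) :
    ∃ (K : Set (EuclideanSpace ℝ (Fin n))) (M : ℝ) (u : ℕ → EuclideanSpace ℝ (Fin n) → ℝ),
      IsCompact K ∧ K ⊆ U ∧ (∀ m, IsTestFun U (u m)) ∧ (∀ m, tsupport (u m) ⊆ K) ∧
      (∀ m x, ‖gradient (u m) x‖ ≤ M) ∧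
      ∀ x, Tendsto (fun m => gradient (u m) x) atTop (𝓝 (gradient ψ x)) := by
  obtain ⟨δ, hδ, hδU⟩ := hc.isCompact.exists_cthickening_subset_open hU hs
  have hKc : IsCompact (Metric.cthickening δ (tsupport ψ)) := hc.isCompact.cthickening
  let φ : ℕ → ContDiffBump (0 : EuclideanSpace ℝ (Fin n)) := fun m =>
    ⟨δ / (m + 1) / 2, δ / (m + 1), by positivity, half_lt_self (by positivity)⟩
  have hφ : ∀ m, (φ m).rOut = δ / (m + 1) := fun m => rfl
  have hφ0 : Tendsto (fun m => (φ m).rOut) atTop (𝓝 0) := by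
    simp only [hφ]
    have := (tendsto_one_div_add_atTop_nhds_zero_nat (𝕜 := ℝ)).const_mul δ
    simpa only [mul_one_div, mul_zero] using this
  have hφδ : ∀ m, (φ m).rOut ≤ δ := fun m => by
    rw [hφ]
    exact div_le_self hδ.le (by linarith [(Nat.cast_nonneg m : (0 : ℝ) ≤ m)])
  let u : ℕ → EuclideanSpace ℝ (Fin n) → ℝ := fun m =>
    convolution ((φ m).normed volume) ψ (ContinuousLinearMap.lsmul ℝ ℝ) volume
  have hderiv : ∀ m x, fderiv ℝ (u m) x =
      convolution ((φ m).normed volume) (fderiv ℝ ψ) (ContinuousLinearMap.lsmul ℝ ℝ) volume x := by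
    intro m x
    have h := hc.hasFDerivAt_convolution_right (μ := volume) (ContinuousLinearMap.lsmul ℝ ℝ)
      ((φ m).continuous_normed (μ := volume)).locallyIntegrable hψ x
    rw [h.fderiv]
    rfl
  have hcont : Continuous (fderiv ℝ ψ) := hψ.continuous_fderiv one_ne_zero
  obtain ⟨M, hM⟩ := hcont.bounded_above_of_compact_support (hc.fderiv (𝕜 := ℝ))
  have hgrad : ∀ (f : EuclideanSpace ℝ (Fin n) → ℝ) x,
      gradient f x = (InnerProductSpace.toDual ℝ _).symm (fderiv ℝ f x) := fun _ _ => rfl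
  have hsupp : ∀ m, tsupport (u m) ⊆ Metric.cthickening δ (tsupport ψ) := by
    intro m
    refine closure_minimal ?_ Metric.isClosed_cthickening
    refine (support_convolution_subset _).trans ?_
    rintro _ ⟨a, ha, b, hb, rfl⟩
    rw [(φ m).support_normed_eq] at ha
    refine Metric.mem_cthickening_of_dist_le (a + b) b δ _ (subset_tsupport _ hb) ?_
    have : ‖a‖ < (φ m).rOut := by simpa using ha
    simpa [dist_eq_norm] using this.le.trans (hφδ m)
  refine ⟨Metric.cthickening δ (tsupport ψ), 2 * M + M, u, hKc, hδU, fun m => ⟨?_, ?_, ?_⟩, hsupp,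
    ?_, ?_⟩
  · exact (φ m).hasCompactSupport_normed.contDiff_convolution_left _ (φ m).contDiff_normed
      hψ.continuous.locallyIntegrable
  · exact hKc.of_isClosed_subset (isClosed_tsupport _) (hsupp m)
  · exact (hsupp m).trans hδU
  · intro m x
    rw [hgrad, LinearIsometryEquiv.norm_map, hderiv]
    have hd := (φ m).dist_normed_convolution_le (μ := volume) (x₀ := x) (ε := 2 * M)
      hcont.aestronglyMeasurable (fun y _ => by
        rw [dist_eq_norm]
        exact (norm_sub_le _ _).trans (by linarith [hM x, hM y]))
    rw [dist_eq_norm] at hd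
    have := norm_le_norm_sub_add
      (convolution ((φ m).normed volume) (fderiv ℝ ψ) (ContinuousLinearMap.lsmul ℝ ℝ) volume x)
      (fderiv ℝ ψ x)
    linarith [hM x]
  · intro x
    simp only [hgrad, hderiv]
    exact ((InnerProductSpace.toDual ℝ _).symm.continuous.tendsto _).comp
      (ContDiffBump.convolution_tendsto_right_of_continuous hφ0 hcont x)

/-- The weak equation may be tested with compactly supported `C¹` functions. -/
lemma IsPAHarmonic.integral_eq_zero {n : ℕ} {Ω U : Set (EuclideanSpace ℝ (Fin n))}
    (hΩopen : IsOpen Ω) (hU : IsOpen U) (hUΩ : U ⊆ Ω) {p : ℝ} (hp : 1 < p)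
    {A : EuclideanSpace ℝ (Fin n) → Matrix (Fin n) (Fin n) ℝ} (hA : IsEllipticMatrix Ω A)
    {G : EuclideanSpace ℝ (Fin n) → ℝ} (hG1 : ContDiffOn ℝ 1 G U)
    (hGharm : IsPAHarmonic A p U G)
    {ψ : EuclideanSpace ℝ (Fin n) → ℝ} (hψ : ContDiff ℝ 1 ψ) (hc : HasCompactSupport ψ)
    (hs : tsupport ψ ⊆ U) :
    ∫ x in U, (aNorm A x (gradient G x)) ^ (p - 2) *
      aInner A x (gradient G x) (gradient ψ x) = 0 := by
  obtain ⟨K, M, u, hK, hKU, hu, huK, huM, hulim⟩ := exists_mollification hU hψ hc hs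
  have hGc := gradient_continuousOn hU hG1
  have hNc := aNorm_continuousOn hΩopen hA hUΩ hGc
  obtain ⟨Θ, hΘ, hell⟩ := hA.elliptic K (hKU.trans hUΩ) hK
  obtain ⟨B, hB⟩ := hK.exists_bound_of_continuousOn (hNc.mono hKU)
  have hgu : ∀ m, Continuous (gradient (u m)) := fun m =>
    (InnerProductSpace.toDual ℝ _).symm.continuous.comp
      ((hu m).1.continuous_fderiv (by simp))
  have hlim := tendsto_integral_of_dominated_convergence (μ := volume.restrict U)
    (F := fun m x => (aNorm A x (gradient G x)) ^ (p - 2) *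
      aInner A x (gradient G x) (gradient (u m) x))
    (f := fun x => (aNorm A x (gradient G x)) ^ (p - 2) *
      aInner A x (gradient G x) (gradient ψ x))
    (K.indicator fun _ => B ^ (p - 1) * (√Θ * M)) ?_ ?_ ?_ ?_
  · refine tendsto_nhds_unique hlim ?_
    simp only [hGharm _ (hu _)]
    exact tendsto_const_nhds
  · intro m
    exact ((hNc.aemeasurable hU.measurableSet).pow_const (p - 2)).aestronglyMeasurable.mul
      ((aInner_continuousOn hΩopen hA hUΩ hGc (hgu m).continuousOn).aestronglyMeasurable
        hU.measurableSet)
  · refine Integrable.mono_measure ?_ Measure.restrict_le_self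
    rw [integrable_indicator_iff hK.measurableSet]
    exact integrableOn_const hK.measure_lt_top.ne
  · intro m
    filter_upwards [ae_restrict_mem hU.measurableSet] with x hx
    by_cases hxK : x ∈ K
    · rw [Set.indicator_of_mem hxK, Real.norm_eq_abs]
      have h0 : 0 ≤ aNorm A x (gradient G x) := Real.sqrt_nonneg _
      have hBx : aNorm A x (gradient G x) ≤ B := by
        have := hB x hxK
        rwa [Real.norm_of_nonneg h0] at this
      have hη : aNorm A x (gradient (u m) x) ≤ √Θ * M := by
        calc aNorm A x (gradient (u m) x) ≤ √(Θ * ‖gradient (u m) x‖ ^ 2) :=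
              Real.sqrt_le_sqrt (hell x hxK _).2
          _ = √Θ * ‖gradient (u m) x‖ := by
              rw [Real.sqrt_mul hΘ.le, Real.sqrt_sq (norm_nonneg _)]
          _ ≤ √Θ * M := mul_le_mul_of_nonneg_left (huM m x) (Real.sqrt_nonneg _)
      refine (abs_flux_le hA p (hUΩ hx) _ _).trans ?_
      exact mul_le_mul (Real.rpow_le_rpow h0 hBx (by linarith)) hη (Real.sqrt_nonneg _)
        (Real.rpow_nonneg (h0.trans hBx) _)
    · have hz : gradient (u m) x = 0 := by
        have : fderiv ℝ (u m) x = 0 :=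
          image_eq_zero_of_notMem_tsupport
            fun h => hxK (huK m (tsupport_fderiv_subset ℝ h))
        rw [gradient, this, map_zero]
      simp [hz, aInner, Set.indicator_of_notMem hxK]
  · refine Eventually.of_forall fun x => ?_
    refine Tendsto.const_mul _ ?_
    have hcts : Continuous fun η : EuclideanSpace ℝ (Fin n) => aInner A x (gradient G x) η := by
      unfold aInner
      fun_prop
    exact (hcts.tendsto _).comp (hulim x)

/-! ### Functions of `G` -/

/-- A band `{a ≤ G ≤ b}` with `0 < a` lies in a compact subset of the punctured domain. -/
lemma exists_compact_band {n : ℕ} {Ω : Set (EuclideanSpace ℝ (Fin n))}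
    {G : EuclideanSpace ℝ (Fin n) → ℝ}
    (hGsing : Tendsto G (𝓝[Ω \ {0}] 0) atTop)
    (hGinf : TendstoZeroAtInfinityIn Ω (Ω \ {0}) G) {a : ℝ} (ha : 0 < a) (b : ℝ) :
    ∃ C : Set (EuclideanSpace ℝ (Fin n)), IsCompact C ∧ C ⊆ Ω \ {0} ∧
      ∀ x ∈ Ω \ {0}, x ∉ C → G x < a ∨ b < G x := by
  obtain ⟨K, hKΩ, hK, hKa⟩ := hGinf a ha
  obtain ⟨r, hr, hrb⟩ := Metric.mem_nhdsWithin_iff.1 (hGsing.eventually_gt_atTop b)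
  refine ⟨K \ Metric.ball 0 r, hK.diff Metric.isOpen_ball, ?_, ?_⟩
  · rintro x ⟨hxK, hxr⟩
    refine ⟨hKΩ hxK, ?_⟩
    rintro rfl
    exact hxr (Metric.mem_ball_self hr)
  · intro x hx hxC
    by_cases hxK : x ∈ K
    · right
      have hxr : x ∈ Metric.ball 0 r := by
        by_contra h
        exact hxC ⟨hxK, h⟩
      exact hrb ⟨hxr, hx⟩
    · exact Or.inl (hKa x ⟨hx, hxK⟩)

/-- Testing the equation with `F ∘ G`. -/
lemma integral_deriv_comp_eq_zero {n : ℕ} {Ω : Set (EuclideanSpace ℝ (Fin n))}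
    (hΩopen : IsOpen Ω) {p : ℝ} (hp : 1 < p)
    {A : EuclideanSpace ℝ (Fin n) → Matrix (Fin n) (Fin n) ℝ} (hA : IsEllipticMatrix Ω A)
    {G : EuclideanSpace ℝ (Fin n) → ℝ} (hG1 : ContDiffOn ℝ 1 G (Ω \ {0}))
    (hGharm : IsPAHarmonic A p (Ω \ {0}) G)
    (hGsing : Tendsto G (𝓝[Ω \ {0}] 0) atTop)
    (hGinf : TendstoZeroAtInfinityIn Ω (Ω \ {0}) G)
    {F : ℝ → ℝ} (hF : ContDiff ℝ 1 F) {a b : ℝ} (ha : 0 < a)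
    (hFa : ∀ t < a, F t = 0) (hFb : ∀ t > b, F t = 0) :
    ∫ x in Ω \ {0}, aNorm A x (gradient G x) ^ p * deriv F (G x) = 0 := by
  classical
  have hU : IsOpen (Ω \ {0}) := hΩopen.sdiff isClosed_singleton
  obtain ⟨C, hC, hCU, hCG⟩ := exists_compact_band hGsing hGinf ha b
  let ψ : EuclideanSpace ℝ (Fin n) → ℝ := (Ω \ {0}).indicator (F ∘ G)
  have hψ0 : ∀ x ∉ C, ψ x = 0 := by
    intro x hx
    by_cases hxU : x ∈ Ω \ {0}
    · rw [show ψ x = F (G x) from Set.indicator_of_mem hxU _]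
      rcases hCG x hxU hx with h | h
      · exact hFa _ h
      · exact hFb _ h
    · exact Set.indicator_of_notMem hxU _
  have hψU : ∀ x ∈ Ω \ {0}, ψ =ᶠ[𝓝 x] F ∘ G := fun x hx => by
    filter_upwards [hU.mem_nhds hx] with y hy
    exact Set.indicator_of_mem hy _
  have hψ : ContDiff ℝ 1 ψ := by
    rw [contDiff_iff_contDiffAt]
    intro x
    by_cases hx : x ∈ C
    · refine ContDiffAt.congr_of_eventuallyEq ?_ (hψU x (hCU hx))
      exact hF.contDiffAt.comp x (hG1.contDiffAt (hU.mem_nhds (hCU hx)))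
    · refine (contDiffAt_const (c := (0 : ℝ))).congr_of_eventuallyEq ?_
      filter_upwards [hC.isClosed.isOpen_compl.mem_nhds hx] with y hy using hψ0 y hy
  have hts : tsupport ψ ⊆ C := by
    refine closure_minimal ?_ hC.isClosed
    intro x hx
    by_contra h
    exact hx (hψ0 x h)
  rw [← IsPAHarmonic.integral_eq_zero hΩopen hU sdiff_subset hp hA hG1 hGharm hψ
    (hC.of_isClosed_subset (isClosed_tsupport _) hts) (hts.trans hCU)]
  refine setIntegral_congr_fun hU.measurableSet fun x hx => ?_
  have hgrad : gradient ψ x = deriv F (G x) • gradient G x := by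
    have hGd : DifferentiableAt ℝ G x :=
      (hG1.contDiffAt (hU.mem_nhds hx)).differentiableAt one_ne_zero
    have hFd : HasDerivAt F (deriv F (G x)) (G x) :=
      (hF.differentiable one_ne_zero (G x)).hasDerivAt
    have h := hFd.comp_hasFDerivAt x hGd.hasFDerivAt
    rw [gradient, (hψU x hx).fderiv_eq, h.fderiv, map_smul]
    rfl
  simp only [hgrad, aInner_smul_right]
  rw [← flux_self hA hp hx.1]
  ring

lemma integrableOn_band {n : ℕ} {Ω : Set (EuclideanSpace ℝ (Fin n))}
    (hΩopen : IsOpen Ω) {p : ℝ} (hp : 1 < p)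
    {A : EuclideanSpace ℝ (Fin n) → Matrix (Fin n) (Fin n) ℝ} (hA : IsEllipticMatrix Ω A)
    {G : EuclideanSpace ℝ (Fin n) → ℝ} (hG1 : ContDiffOn ℝ 1 G (Ω \ {0}))
    (hGsing : Tendsto G (𝓝[Ω \ {0}] 0) atTop)
    (hGinf : TendstoZeroAtInfinityIn Ω (Ω \ {0}) G)
    {h : ℝ → ℝ} (hh : Continuous h) {a b : ℝ} (ha : 0 < a)
    (hha : ∀ t < a, h t = 0) (hhb : ∀ t > b, h t = 0) :
    IntegrableOn (fun x => aNorm A x (gradient G x) ^ p * h (G x)) (Ω \ {0}) := by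
  have hU : IsOpen (Ω \ {0}) := hΩopen.sdiff isClosed_singleton
  obtain ⟨C, hC, hCU, hCG⟩ := exists_compact_band hGsing hGinf ha b
  have hcont : ContinuousOn (fun x => aNorm A x (gradient G x) ^ p * h (G x)) (Ω \ {0}) :=
    ((aNorm_continuousOn hΩopen hA sdiff_subset (gradient_continuousOn hU hG1)).rpow_const
      fun _ _ => Or.inr (by linarith)).mul (hh.comp_continuousOn hG1.continuousOn)
  refine ((hcont.mono hCU).integrableOn_compact hC).of_forall_sdiff_eq_zero hU.measurableSet ?_
  rintro x ⟨hx, hxC⟩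
  rcases hCG x hx hxC with hx' | hx'
  · simp [hha _ hx']
  · simp [hhb _ hx']

/-- Invariance of the push-forward of `|∇G|_A^p dx` under `G`: like Lebesgue measure, it gives
`h` and `t ↦ c h(ct)` the same integral, since their difference has a compactly supported
primitive `t ↦ ∫_{ct}^t h`. -/
lemma integral_rescale {n : ℕ} {Ω : Set (EuclideanSpace ℝ (Fin n))}
    (hΩopen : IsOpen Ω) {p : ℝ} (hp : 1 < p)
    {A : EuclideanSpace ℝ (Fin n) → Matrix (Fin n) (Fin n) ℝ} (hA : IsEllipticMatrix Ω A)
    {G : EuclideanSpace ℝ (Fin n) → ℝ} (hG1 : ContDiffOn ℝ 1 G (Ω \ {0}))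
    (hGharm : IsPAHarmonic A p (Ω \ {0}) G)
    (hGsing : Tendsto G (𝓝[Ω \ {0}] 0) atTop)
    (hGinf : TendstoZeroAtInfinityIn Ω (Ω \ {0}) G)
    {h : ℝ → ℝ} (hh : Continuous h) {a b : ℝ} (ha : 0 < a) (hb : 0 < b)
    (hha : ∀ t < a, h t = 0) (hhb : ∀ t > b, h t = 0) {c : ℝ} (hc : 0 < c) (hc1 : c ≤ 1) :
    IntegrableOn (fun x => aNorm A x (gradient G x) ^ p * (c * h (c * G x))) (Ω \ {0}) ∧
    ∫ x in Ω \ {0}, aNorm A x (gradient G x) ^ p * (c * h (c * G x)) =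
      ∫ x in Ω \ {0}, aNorm A x (gradient G x) ^ p * h (G x) := by
  have hint := integrableOn_band hΩopen hp hA hG1 hGsing hGinf hh ha hha hhb
  have hint' : IntegrableOn (fun x => aNorm A x (gradient G x) ^ p * (c * h (c * G x)))
      (Ω \ {0}) := by
    refine integrableOn_band hΩopen hp hA hG1 hGsing hGinf (h := fun t => c * h (c * t))
      (by fun_prop) (a := a / c) (b := b / c) (by positivity) ?_ ?_
    · intro t ht
      rw [lt_div_iff₀ hc] at ht
      simp [hha (c * t) (by linarith)]
    · intro t ht
      have ht' := (div_lt_iff₀ hc).1 ht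
      simp [hhb (c * t) (by linarith)]
  refine ⟨hint', ?_⟩
  have hderiv : ∀ t, HasDerivAt (fun t => ∫ s in (c * t)..t, h s) (h t - c * h (c * t)) t := by
    intro t
    have hΦ : ∀ t, HasDerivAt (fun t => ∫ s in (0 : ℝ)..t, h s) (h t) t := fun t =>
      intervalIntegral.integral_hasDerivAt_right (hh.intervalIntegrable _ _)
        (hh.stronglyMeasurableAtFilter _ _) hh.continuousAt
    have h2 : HasDerivAt (fun t => ∫ s in (0 : ℝ)..(c * t), h s) (h (c * t) * c) t := by
      have := (hΦ (c * t)).comp t ((hasDerivAt_id t).const_mul c)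
      simpa [Function.comp_def] using this
    have h3 := (hΦ t).sub h2
    have heq : (fun t => ∫ s in (c * t)..t, h s) =
        (fun t => ∫ s in (0 : ℝ)..t, h s) - fun t => ∫ s in (0 : ℝ)..(c * t), h s := by
      funext t
      exact (intervalIntegral.integral_interval_sub_left (hh.intervalIntegrable _ _)
        (hh.intervalIntegrable _ _)).symm
    rw [heq, mul_comm c]
    exact h3
  have hderiv' : deriv (fun t => ∫ s in (c * t)..t, h s) = fun t => h t - c * h (c * t) :=
    funext fun t => (hderiv t).deriv
  have hF : ContDiff ℝ 1 (fun t => ∫ s in (c * t)..t, h s) := by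
    rw [contDiff_one_iff_deriv]
    refine ⟨fun t => (hderiv t).differentiableAt, ?_⟩
    rw [hderiv']
    fun_prop
  have hzero := integral_deriv_comp_eq_zero hΩopen hp hA hG1 hGharm hGsing hGinf hF
    (a := a) (b := b / c) ha ?_ ?_
  · rw [hderiv'] at hzero
    simp only [mul_sub] at hzero
    rw [integral_sub hint hint'] at hzero
    linarith
  · intro t ht
    refine intervalIntegral.integral_zero_ae (Eventually.of_forall fun s hs => hha s ?_)
    rcases mem_uIoc.1 hs with hs | hs
    · linarith [hs.2]
    · rcases le_total 0 t with h0 | h0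
      · linarith [hs.2, mul_le_of_le_one_left h0 hc1]
      · linarith [hs.2, mul_nonpos_of_nonneg_of_nonpos hc.le h0]
  · intro t ht
    have ht' := (div_lt_iff₀ hc).1 ht
    have ht0 : 0 < t := lt_trans (by positivity) ht
    refine intervalIntegral.integral_zero_ae (Eventually.of_forall fun s hs => hhb s ?_)
    rw [uIoc_of_le (by nlinarith)] at hs
    linarith [hs.1]

/-! ### Divergence of the integral -/

/-- `G` is not constant along rays into the singularity. -/
lemma exists_gradient_ne_zero {n : ℕ} (hn : 2 ≤ n) {Ω : Set (EuclideanSpace ℝ (Fin n))}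
    (hΩopen : IsOpen Ω) (h0 : (0 : EuclideanSpace ℝ (Fin n)) ∈ Ω)
    {G : EuclideanSpace ℝ (Fin n) → ℝ} (hG1 : ContDiffOn ℝ 1 G (Ω \ {0}))
    (hGsing : Tendsto G (𝓝[Ω \ {0}] 0) atTop) :
    ∃ x ∈ Ω \ {0}, gradient G x ≠ 0 := by
  by_contra! hcon
  have hU : IsOpen (Ω \ {0}) := hΩopen.sdiff isClosed_singleton
  obtain ⟨r, hr, hrΩ⟩ := Metric.isOpen_iff.1 hΩopen 0 h0
  let e : EuclideanSpace ℝ (Fin n) := EuclideanSpace.single ⟨0, by omega⟩ 1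
  have he : ‖e‖ = 1 := by simp [e]
  have hmem : ∀ t ∈ Ioo (0 : ℝ) r, t • e ∈ Ω \ {0} := by
    intro t ht
    have hnorm : ‖t • e‖ = t := by rw [norm_smul, he, mul_one, Real.norm_of_nonneg ht.1.le]
    refine ⟨hrΩ (by simpa [hnorm] using ht.2), ?_⟩
    rintro (h : t • e = 0)
    rw [h, norm_zero] at hnorm
    exact ht.1.ne hnorm
  have hderiv : ∀ t ∈ Ioo (0 : ℝ) r, HasDerivAt (fun t : ℝ => G (t • e)) 0 t := by
    intro t ht
    have hGd : HasFDerivAt G (fderiv ℝ G (t • e)) (t • e) :=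
      ((hG1.contDiffAt (hU.mem_nhds (hmem t ht))).differentiableAt one_ne_zero).hasFDerivAt
    have hz : fderiv ℝ G (t • e) = 0 := by
      rw [← toDual_gradient, hcon _ (hmem t ht), map_zero]
    rw [hz] at hGd
    have := hGd.comp_hasDerivAt t ((hasDerivAt_id t).smul_const e)
    simpa [Function.comp_def] using this
  have hconst : ∀ t ∈ Ioo (0 : ℝ) r, G (t • e) = G ((r / 2) • e) := by
    intro t ht
    exact isOpen_Ioo.is_const_of_deriv_eq_zero isPreconnected_Ioo
      (fun s hs => (hderiv s hs).differentiableAt.differentiableWithinAt)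
      (fun s hs => (hderiv s hs).deriv) ht ⟨by linarith, by linarith⟩
  have hray : Tendsto (fun t : ℝ => t • e) (𝓝[>] 0) (𝓝[Ω \ {0}] 0) := by
    refine tendsto_nhdsWithin_iff.2 ⟨?_, ?_⟩
    · have : Continuous fun t : ℝ => t • e := by fun_prop
      simpa using (this.tendsto 0).mono_left nhdsWithin_le_nhds
    · filter_upwards [Ioo_mem_nhdsGT hr] with t ht using hmem t ht
  obtain ⟨t, ht1, ht2⟩ := (((hGsing.comp hray).eventually_gt_atTop (G ((r / 2) • e))).and
    (Ioo_mem_nhdsGT hr)).exists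
  exact ht1.ne' (hconst t ht2)

/-- The tent function of height `1` centred at `t₀` and supported in `[2t₀/3, 4t₀/3]`. The ratio
of the endpoints being `2`, its dilates by powers of `2` overlap only at endpoints. -/
noncomputable def tent (t₀ t : ℝ) : ℝ := max 0 (1 - |t - t₀| * (3 / t₀))

lemma tent_continuous (t₀ : ℝ) : Continuous (tent t₀) := by
  unfold tent
  fun_prop

lemma tent_nonneg (t₀ t : ℝ) : 0 ≤ tent t₀ t := le_max_left _ _

lemma tent_le_one {t₀ : ℝ} (ht₀ : 0 < t₀) (t : ℝ) : tent t₀ t ≤ 1 := by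
  have : 0 ≤ |t - t₀| * (3 / t₀) := by positivity
  exact max_le zero_le_one (by linarith)

lemma tent_self (t₀ : ℝ) : tent t₀ t₀ = 1 := by simp [tent]

lemma bounds_of_tent_ne_zero {t₀ t : ℝ} (ht₀ : 0 < t₀) (h : tent t₀ t ≠ 0) :
    2 / 3 * t₀ < t ∧ t < 4 / 3 * t₀ := by
  have hpos : 0 < 1 - |t - t₀| * (3 / t₀) := by
    by_contra! hle
    exact h (max_eq_left hle)
  have h1 : |t - t₀| * (3 / t₀) < 1 := by linarith
  rw [mul_div_assoc', div_lt_one ht₀] at h1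
  obtain ⟨h2, h3⟩ := abs_lt.1 (show |t - t₀| < t₀ / 3 by linarith)
  constructor <;> linarith

/-- At most one dyadic dilate of the tent is nonzero at `g`. -/
lemma sum_tent_le {t₀ g : ℝ} (ht₀ : 0 < t₀) (hg : 0 < g) (N : ℕ) :
    ∑ k ∈ Finset.range N, (1 / 2 : ℝ) ^ k * tent t₀ ((1 / 2) ^ k * g) ≤ 4 / 3 * t₀ / g := by
  by_cases hex : ∃ k ∈ Finset.range N, tent t₀ ((1 / 2) ^ k * g) ≠ 0
  · obtain ⟨k, hk, hkne⟩ := hex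
    have hdisj : ∀ i j : ℕ, i < j → tent t₀ ((1 / 2) ^ i * g) ≠ 0 →
        tent t₀ ((1 / 2) ^ j * g) ≠ 0 → False := by
      intro i j hij hi hj
      have hpow : (1 / 2 : ℝ) ^ j ≤ (1 / 2) ^ (i + 1) :=
        pow_le_pow_of_le_one (by norm_num) (by norm_num) hij
      have hle := mul_le_mul_of_nonneg_right hpow hg.le
      rw [pow_succ] at hle
      linarith [(bounds_of_tent_ne_zero ht₀ hi).2, (bounds_of_tent_ne_zero ht₀ hj).1]
    rw [Finset.sum_eq_single k _ fun h => absurd hk h]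
    · rw [le_div_iff₀ hg]
      have hle := (bounds_of_tent_ne_zero ht₀ hkne).2
      have hpos : 0 < (1 / 2 : ℝ) ^ k * g := by positivity
      nlinarith [tent_le_one ht₀ ((1 / 2) ^ k * g)]
    · intro j _ hjk
      by_contra hj
      have hj' : tent t₀ ((1 / 2) ^ j * g) ≠ 0 := fun h => hj (by rw [h, mul_zero])
      rcases lt_or_gt_of_ne hjk with h | h
      · exact hdisj j k h hj' hkne
      · exact hdisj k j h hkne hj'
  · push Not at hex
    rw [Finset.sum_eq_zero fun k hk => by rw [hex k hk, mul_zero]]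
    positivity

lemma lintegral_rpow_div_eq_top {n : ℕ} (hn : 2 ≤ n) {Ω : Set (EuclideanSpace ℝ (Fin n))}
    (hΩopen : IsOpen Ω) {p : ℝ} (hp : 1 < p)
    {A : EuclideanSpace ℝ (Fin n) → Matrix (Fin n) (Fin n) ℝ} (hA : IsEllipticMatrix Ω A)
    (h0 : (0 : EuclideanSpace ℝ (Fin n)) ∈ Ω)
    {G : EuclideanSpace ℝ (Fin n) → ℝ} (hG1 : ContDiffOn ℝ 1 G (Ω \ {0}))
    (hGpos : ∀ x ∈ Ω \ {0}, 0 < G x)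
    (hGharm : IsPAHarmonic A p (Ω \ {0}) G)
    (hGsing : Tendsto G (𝓝[Ω \ {0}] 0) atTop)
    (hGinf : TendstoZeroAtInfinityIn Ω (Ω \ {0}) G) :
    ∫⁻ x in Ω \ {0}, ENNReal.ofReal (aNorm A x (gradient G x) ^ p / G x) = ⊤ := by
  have hU : IsOpen (Ω \ {0}) := hΩopen.sdiff isClosed_singleton
  have hNp : ContinuousOn (fun x => aNorm A x (gradient G x) ^ p) (Ω \ {0}) :=
    (aNorm_continuousOn hΩopen hA sdiff_subset (gradient_continuousOn hU hG1)).rpow_const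
      fun _ _ => Or.inr (by linarith)
  have hNp0 : ∀ x, 0 ≤ aNorm A x (gradient G x) ^ p := fun x =>
    Real.rpow_nonneg (Real.sqrt_nonneg _) _
  obtain ⟨x₀, hx₀, hgx₀⟩ := exists_gradient_ne_zero hn hΩopen h0 hG1 hGsing
  have ht₀ : 0 < G x₀ := hGpos x₀ hx₀
  have hta : ∀ t < 2 / 3 * G x₀, tent (G x₀) t = 0 := fun t ht => by
    by_contra h
    linarith [(bounds_of_tent_ne_zero ht₀ h).1]
  have htb : ∀ t > 4 / 3 * G x₀, tent (G x₀) t = 0 := fun t ht => by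
    by_contra h
    linarith [(bounds_of_tent_ne_zero ht₀ h).2]
  have hJint := integrableOn_band hΩopen hp hA hG1 hGsing hGinf (tent_continuous (G x₀))
    (by positivity) hta htb
  have hJ0 : ∀ x, 0 ≤ aNorm A x (gradient G x) ^ p * tent (G x₀) (G x) := fun x =>
    mul_nonneg (hNp0 x) (tent_nonneg _ _)
  have hJpos : 0 < ∫ x in Ω \ {0}, aNorm A x (gradient G x) ^ p * tent (G x₀) (G x) := by
    refine lt_of_le_of_ne (integral_nonneg hJ0) fun hzero => ?_
    have hae := (integral_eq_zero_iff_of_nonneg hJ0 hJint).1 hzero.symm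
    have heq := Measure.eqOn_open_of_ae_eq hae hU
      (hNp.mul ((tent_continuous (G x₀)).comp_continuousOn hG1.continuousOn)) continuousOn_const
    have hx := heq hx₀
    simp only [Pi.zero_apply, tent_self, mul_one] at hx
    have hpos : 0 < aNorm A x₀ (gradient G x₀) :=
      Real.sqrt_pos.2 (hA.posdef x₀ hx₀.1 _ hgx₀)
    exact (Real.rpow_pos_of_pos hpos p).ne' hx
  by_contra hfin
  have hfint : IntegrableOn (fun x => aNorm A x (gradient G x) ^ p / G x) (Ω \ {0}) := by
    refine ⟨(hNp.div hG1.continuousOn fun x hx => (hGpos x hx).ne').aestronglyMeasurable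
      hU.measurableSet, ?_⟩
    rw [hasFiniteIntegral_iff_ofReal]
    · exact lt_top_iff_ne_top.2 hfin
    · filter_upwards [ae_restrict_mem hU.measurableSet] with x hx
      exact div_nonneg (hNp0 x) (hGpos x hx).le
  have hresc := fun k : ℕ => integral_rescale hΩopen hp hA hG1 hGharm hGsing hGinf
    (tent_continuous (G x₀)) (by positivity) (by positivity) hta htb
    (c := (1 / 2) ^ k) (by positivity) (pow_le_one₀ (by norm_num) (by norm_num))
  have hbound : ∀ N : ℕ,
      N * ∫ x in Ω \ {0}, aNorm A x (gradient G x) ^ p * tent (G x₀) (G x) ≤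
        4 / 3 * G x₀ * ∫ x in Ω \ {0}, aNorm A x (gradient G x) ^ p / G x := by
    intro N
    calc N * ∫ x in Ω \ {0}, aNorm A x (gradient G x) ^ p * tent (G x₀) (G x)
        = ∑ k ∈ Finset.range N, ∫ x in Ω \ {0}, aNorm A x (gradient G x) ^ p *
            ((1 / 2) ^ k * tent (G x₀) ((1 / 2) ^ k * G x)) := by
          simp only [(hresc _).2, Finset.sum_const, Finset.card_range, nsmul_eq_mul]
      _ = ∫ x in Ω \ {0}, ∑ k ∈ Finset.range N, aNorm A x (gradient G x) ^ p *
            ((1 / 2) ^ k * tent (G x₀) ((1 / 2) ^ k * G x)) :=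
          (integral_finsetSum _ fun k _ => (hresc k).1).symm
      _ ≤ ∫ x in Ω \ {0}, 4 / 3 * G x₀ * (aNorm A x (gradient G x) ^ p / G x) := by
          refine setIntegral_mono_on (integrable_finsetSum _ fun k _ => (hresc k).1)
            (hfint.const_mul _) hU.measurableSet fun x hx => ?_
          rw [← Finset.mul_sum]
          refine (mul_le_mul_of_nonneg_left (sum_tent_le ht₀ (hGpos x hx) N) (hNp0 x)).trans_eq ?_
          ring
      _ = 4 / 3 * G x₀ * ∫ x in Ω \ {0}, aNorm A x (gradient G x) ^ p / G x :=
          integral_const_mul _ _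
  obtain ⟨N, hN⟩ := exists_nat_gt
    ((4 / 3 * G x₀ * ∫ x in Ω \ {0}, aNorm A x (gradient G x) ^ p / G x) /
      ∫ x in Ω \ {0}, aNorm A x (gradient G x) ^ p * tent (G x₀) (G x))
  rw [div_lt_iff₀ hJpos] at hN
  exact absurd (hbound N) (not_le.2 hN)

theorem null_criticality_pA_laplacian
    {n : ℕ} (hn : 2 ≤ n) (Ω : Set (EuclideanSpace ℝ (Fin n)))
    (hΩopen : IsOpen Ω) (hΩconn : IsConnected Ω)
    (p : ℝ) (hp : 1 < p)
    (A : EuclideanSpace ℝ (Fin n) → Matrix (Fin n) (Fin n) ℝ)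
    (hA : IsEllipticMatrix Ω A)
    (h0 : (0 : EuclideanSpace ℝ (Fin n)) ∈ Ω) (hpn : p ≤ n)
    (hsub : IsSubcritical A p (fun _ => (0:ℝ)) Ω)
    (G : EuclideanSpace ℝ (Fin n) → ℝ)
    (hG1 : ContDiffOn ℝ 1 G (Ω \ {0}))
    (hGpos : ∀ x ∈ Ω \ {0}, 0 < G x)
    (hGharm : IsPAHarmonic A p (Ω \ {0}) G)
    (hGsing : Tendsto G (𝓝[Ω \ {0}] 0) atTop)
    (hGinf : TendstoZeroAtInfinityIn Ω (Ω \ {0}) G) :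
    (∫⁻ x in Ω \ {0}, ENNReal.ofReal
        ((((p - 1) / p) ^ p * (aNorm A x (gradient G x) / G x) ^ p) *
          (G x ^ ((p - 1) / p)) ^ p) = ⊤) ∧
    (∫⁻ x in Ω \ {0}, ENNReal.ofReal
        (((p - 1) / p) ^ p * ((aNorm A x (gradient G x)) ^ p / G x)) = ⊤) := by
  have hU : IsOpen (Ω \ {0}) := hΩopen.sdiff isClosed_singleton
  -- On the punctured domain both integrands are a constant multiple of `|∇G|_A^p / G`.
  have hcp : 0 < ((p - 1) / p) ^ p := Real.rpow_pos_of_pos (div_pos (by linarith) (by linarith)) _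
  have htop : ∫⁻ x in Ω \ {0}, ENNReal.ofReal
      (((p - 1) / p) ^ p * ((aNorm A x (gradient G x)) ^ p / G x)) = ⊤ := by
    simp only [ENNReal.ofReal_mul hcp.le]
    rw [lintegral_const_mul' _ _ ENNReal.ofReal_ne_top,
      lintegral_rpow_div_eq_top hn hΩopen hp hA h0 hG1 hGpos hGharm hGsing hGinf]
    exact ENNReal.mul_top (by simpa using hcp)
  refine ⟨?_, htop⟩
  rw [← htop]
  refine setLIntegral_congr_fun hU.measurableSet fun x hx => ?_
  have hG := hGpos x hx
  have hpow : (G x ^ ((p - 1) / p)) ^ p = G x ^ p / G x := by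
    rw [← Real.rpow_mul hG.le, div_mul_cancel₀ _ (by linarith : p ≠ 0), Real.rpow_sub_one hG.ne']
  have hGp : G x ^ p ≠ 0 := (Real.rpow_pos_of_pos hG p).ne'
  have ha : 0 ≤ aNorm A x (gradient G x) := Real.sqrt_nonneg _
  rw [hpow, Real.div_rpow ha hG.le]
  congr 1
  field_simp
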